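/- arXiv:1201.0701 — 2 statements merged into one kernel-verified Lean document; each statement's English description precedes it below -/
import Mathlib

section
/- Let q = 2^{12} and N = 45. For any primitive element γ of F_q, let C_i = γ^i⟨γ^{45}⟩ (0 ≤ i ≤ 44) be the cyclotomic classes of order 45 of F_q, and let D = C₀ ∪ C₅ ∪ C₁₀. Then the Cayley graph Cay(F_q, D) is a strongly regular graph. -/
open scoped Classical

/-- The cyclotomic class `C_i = γ^i ⟨γ^N⟩ = {γ^{i+Nk} : k ∈ ℤ}` of order `N` of a finite
field, with respect to the primitive element `γ`. -/
def cycClass {F : Type*} [Field F] (γ : Fˣ) (N i : ℕ) : Set F :=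
  {x : F | ∃ k : ℤ, x = ((γ ^ ((i : ℤ) + (N : ℤ) * k) : Fˣ) : F)}

/-- The Cayley graph on the additive group `G` with connection set `D`. -/
def cayley {G : Type*} [AddGroup G] (D : Set G) : SimpleGraph G :=
  SimpleGraph.fromRel fun x y => x - y ∈ D

namespace DeLange

/-- Multiplication by `x` in `F₂[x]/(x^12+x^6+x^4+x+1)`, elements encoded as bit vectors. -/
def step (x : ℕ) : ℕ := (2 * x) ^^^ (4179 * (x >>> 11))

/-- strict iteration of `step` -/
def iter : ℕ → ℕ → ℕ
  | 0, x => x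
  | k + 1, x => Nat.rec (iter k (step 0)) (fun n _ => iter k (step (n + 1))) x

/-- accumulate the set of visited elements in a bit mask -/
def visit : ℕ → ℕ → ℕ → ℕ
  | 0, _, acc => acc
  | k + 1, x, acc => Nat.rec (visit k (step 0) (acc ||| 2 ^ 0))
      (fun n _ => Nat.rec 0 (fun m _ => visit k (step (n + 1)) (m + 1)) (acc ||| 2 ^ (n + 1))) x

def dl : ℕ → ℕ → List ℕ
  | 0, _ => []
  | k + 1, x => Nat.rec [] (fun n _ => (n + 1) :: iter 5 (n + 1) :: iter 10 (n + 1) ::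
      dl k (iter 45 (n + 1))) x

def L : List ℕ := [1, 32, 1024, 2733, 399, 277, 2546, 2949, 1065, 1816, 114, 3648, 2391, 3958, 2178, 20, 640, 287,
764, 3743, 1367, 2693, 1167, 811, 3082, 1768, 3719, 577, 2412, 2070, 272, 678, 1503, 1174, 11,
352, 220, 3027, 3817, 937, 1177, 491, 3506, 285, 774, 1299, 94, 3008, 2599, 156, 979, 3760,
183, 1715, 1217, 2795, 2383, 3738, 1527, 3213, 1072, 1176, 459, 2164, 2992, 649, 583, 2476, 69,
3595, 1924, 929, 79, 2528, 2501, 735, 2815, 3023, 1198, 1803, 530, 3530, 3613, 1348, 2843,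
1978, 1121, 1484, 3053, 2345, 1578, 1684, 263, 2375, 3446, 2510, 2298, 2595, 28, 3863, 1186,
1675, 2748, 943, 1113, 2993, 681, 1087, 769, 458, 2485, 3702, 2084, 432, 3832, 2487, 805, 936,
1209, 1515, 1823, 146, 531, 3297, 3035, 4073, 3391, 238, 3475, 2023, 4033, 3633, 1237, 2155,
2128, 3174, 2920, 2522, 3765, 23, 736, 1150, 3416, 3086, 6, 192, 2131, 3867, 1314, 1662, 1241,
2539, 2213, 515, 300, 1318, 1799, 914, 1017, 120, 3840, 1602, 3592, 2020, 4001, 4075, 2929,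
2810, 2202, 1571, 1972, 3462, 1949, 129, 1632, 4052, 3217, 2855, 58, 1856, 712, 2079, 1744,
2550, 2821, 1146, 3338, 1614, 2580, 3641, 452, 2165, 3111, 840, 2282, 1798, 946, 2041, 2773,
3727, 1879, 2042, 3169, 2952, 2291, 2819, 1210, 461, 2389, 3894, 3474, 1309, 414, 1180, 331,
2502, 418, 1205, 1131, 3778, 3831, 2135, 2999, 617, 3180, 3098, 1256, 4043, 2735, 463, 2325,
3323, 2203, 1539, 1199, 1835, 1554, 1895, 3986, 1105, 745, 3135, 72, 724, 2975, 1897, 3965,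
2530, 2437, 2387, 4086, 2257, 2566, 1212, 1355, 1426, 45, 1440, 1718, 1351, 2782, 2544, 3013,
3113, 529, 876, 3178, 2784, 2095, 208, 3620, 612, 3532]

def M : ℕ := 1020533521347354428342864162950884554607705113563380077570533190171177115607902032340202000227820148467801825854627704086348041053319994812130415482096856766185903712874471304634638619842065020435544665868880681470916659467247435025336948366222865349698960869597407085041058597292147356959703832081635597245523457264299137676067615214928816580555880466090801384747467423829788587140177544221360753233991542805048105031820408485582090055565875783768143761356954178042194400388066410051496677877670101324677225869025613266942822487506323984160737611081759350236787538634580248056780047493189482058684394366831683825313825265516974969975689388748759048670485715395540536948344240282200026318333650274195695933298651172051597681485804322098337817928439221428906282893789146840806824046974991856708108594711425192455339557504157672558484003778582520755752702189925071625474088085008073164724476547788636301827240324346828525123515056588325518632571749874555589809322500139212737583308306997201537058033647787305613980676901156014398928491147847251642112407657656352750446854860794160813763781580676622748257852087023731079783209310457845066398641679406784324724565357157029171901904528547267523588795529955813603750569102459786457253954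

def Z : List ℕ := [1, 2, 4, 8, 16, 32, 64, 128, 256, 512, 1024, 2048, 83, 166, 332, 664, 1328, 2656, 1171, 2342, 543, 1086, 2172, 171, 342, 684, 1368, 2736, 1331, 2662, 1183, 2366, 559, 1118, 2236, 299, 598, 1196, 2392, 739, 1478, 2956, 1867, 3734, 3455]

theorem visit_eq : visit 4095 1 0 = 2 ^ 4096 - 2 := by decide +kernel

theorem dl_eq : dl 91 1 = L := by decide +kernel

theorem Z_eq : ∀ i < 45, iter i 1 = Z.getD i 0 := by decide +kernel

theorem L_nodup : L.Nodup := by decide +kernel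

theorem L_lt : ∀ n ∈ L, n < 4096 ∧ 0 < n := by decide +kernel

theorem M_eq : L.foldl (fun m a => m ||| 2 ^ a) 0 = M := by decide +kernel

theorem count_eq : ∀ i < 45, (L.filter (fun a => M.testBit (a ^^^ Z.getD i 0))).length =
    if i = 0 ∨ i = 5 ∨ i = 10 then 20 else 18 := by decide +kernel

theorem iter_4095 : iter 4095 1 = 1 := by decide +kernel

theorem step_bd' : ∀ a < 64, ∀ b < 64, step (64 * a + b) < 4096 ∧
    (64 * a + b ≠ 0 → step (64 * a + b) ≠ 0) := by decide +kernel

theorem step_bd (n : ℕ) (h : n < 4096) : step n < 4096 ∧ (n ≠ 0 → step n ≠ 0) := by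
  have := step_bd' (n / 64) (by omega) (n % 64) (by omega)
  rwa [Nat.div_add_mod] at this

theorem iter_succ (k x : ℕ) : iter (k + 1) x = iter k (step x) := by
  cases x <;> rfl

theorem iter_eq (k x : ℕ) : iter k x = step^[k] x := by
  induction k generalizing x with
  | zero => rfl
  | succ k ih => rw [iter_succ, ih, Function.iterate_succ_apply]

theorem iterate_bd (k n : ℕ) (h : n < 4096) :
    step^[k] n < 4096 ∧ (n ≠ 0 → step^[k] n ≠ 0) := by
  induction k generalizing n with
  | zero => exact ⟨h, id⟩
  | succ k ih =>
    have h1 := step_bd n h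
    have h2 := ih _ h1.1
    exact ⟨h2.1, fun h0 => h2.2 (h1.2 h0)⟩

theorem visit_succ (k x acc : ℕ) :
    visit (k + 1) x acc = visit k (step x) (acc ||| 2 ^ x) := by
  cases x with
  | zero => rfl
  | succ n =>
    have h0 : acc ||| 2 ^ (n + 1) ≠ 0 := by
      intro h
      have := congrArg (fun t => Nat.testBit t (n + 1)) h
      simp at this
    obtain ⟨m, hm⟩ := Nat.exists_eq_succ_of_ne_zero h0
    change Nat.rec (motive := fun _ => ℕ) 0 (fun m _ => visit k (step (n + 1)) (m + 1))
      (acc ||| 2 ^ (n + 1)) = _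
    rw [hm]

theorem visit_spec (k x acc n : ℕ) (h : (visit k x acc).testBit n = true) :
    acc.testBit n = true ∨ ∃ j, n = step^[j] x := by
  induction k generalizing x acc with
  | zero => exact Or.inl h
  | succ k ih =>
    rw [visit_succ] at h
    rcases ih _ _ h with h | ⟨j, hj⟩
    · rw [Nat.testBit_or, Nat.testBit_two_pow] at h
      rcases (Bool.or_eq_true _ _).mp h with h | h
      · exact Or.inl h
      · exact Or.inr ⟨0, (of_decide_eq_true h).symm⟩
    · exact Or.inr ⟨j + 1, hj⟩

theorem surj (n : ℕ) (h0 : n ≠ 0) (h : n < 4096) : ∃ j, n = step^[j] 1 := by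
  have h1 : (visit 4095 1 0).testBit n = true := by
    rw [visit_eq]
    rw [Nat.testBit_two_pow_sub_succ (x := 1) (Nat.one_lt_two_pow (by norm_num))]
    have h2 : Nat.testBit 1 n = false := by
      exact Nat.testBit_lt_two_pow (Nat.one_lt_two_pow h0)
    simp [h2, h]
  rcases visit_spec _ _ _ _ h1 with h | h
  · simp at h
  · exact h

theorem dl_succ (k x : ℕ) (hx : x ≠ 0) :
    dl (k + 1) x = x :: step^[5] x :: step^[10] x :: dl k (step^[45] x) := by
  obtain ⟨m, rfl⟩ := Nat.exists_eq_succ_of_ne_zero hx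
  simp only [← iter_eq]
  rfl

theorem mem_dl (k x n : ℕ) (hx : x ≠ 0) (hx' : x < 4096) :
    n ∈ dl k x ↔ ∃ j < k, ∃ r, (r = 0 ∨ r = 5 ∨ r = 10) ∧ n = step^[45 * j + r] x := by
  induction k generalizing x with
  | zero => simp [dl]
  | succ k ih =>
    have hb := iterate_bd 45 x hx'
    rw [dl_succ k x hx]
    simp only [List.mem_cons]
    rw [ih _ (hb.2 hx) hb.1]
    constructor
    · rintro (h | h | h | ⟨j, hj, r, hr, h⟩)
      · exact ⟨0, by omega, 0, by simp, h⟩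
      · exact ⟨0, by omega, 5, by simp, h⟩
      · exact ⟨0, by omega, 10, by simp, h⟩
      · refine ⟨j + 1, by omega, r, hr, ?_⟩
        rw [h, ← Function.iterate_add_apply]
        rw [show 45 * (j + 1) + r = 45 * j + r + 45 by ring]
    · rintro ⟨j, hj, r, hr, h⟩
      rcases j with _ | j
      · rcases hr with rfl | rfl | rfl
        · exact Or.inl h
        · exact Or.inr (Or.inl h)
        · exact Or.inr (Or.inr (Or.inl h))
      · refine Or.inr (Or.inr (Or.inr ⟨j, by omega, r, hr, ?_⟩))
        rw [h, ← Function.iterate_add_apply]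
        rw [show 45 * (j + 1) + r = 45 * j + r + 45 by ring]

theorem mem_L (n : ℕ) :
    n ∈ L ↔ ∃ j < 91, ∃ r, (r = 0 ∨ r = 5 ∨ r = 10) ∧ n = step^[45 * j + r] 1 := by
  rw [← dl_eq, mem_dl _ _ _ (by norm_num) (by norm_num)]

theorem foldl_testBit (l : List ℕ) (acc n : ℕ) :
    (l.foldl (fun m a => m ||| 2 ^ a) acc).testBit n = true ↔ acc.testBit n = true ∨ n ∈ l := by
  induction l generalizing acc with
  | nil => simp
  | cons a l ih =>
    rw [List.foldl_cons, ih, Nat.testBit_or, Nat.testBit_two_pow]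
    simp only [Bool.or_eq_true, decide_eq_true_eq, List.mem_cons, eq_comm (a := a), or_assoc]

theorem M_spec (n : ℕ) : M.testBit n = true ↔ n ∈ L := by
  rw [← M_eq, foldl_testBit]; simp

section ring

variable {R : Type*} [CommRing R]

/-- evaluation of a bit vector at `x` -/
noncomputable def ev (x : R) (n : ℕ) : R :=
  ∑ i ∈ Finset.range 13, if n.testBit i then x ^ i else 0

theorem ev_zero (x : R) : ev x 0 = 0 := by simp [ev]

theorem ev_one (x : R) : ev x 1 = 1 := by
  unfold ev
  have : ∀ i ∈ Finset.range 13, (Nat.testBit 1 i = true ↔ i = 0) := by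
    decide
  rw [Finset.sum_congr rfl (fun i hi => if_congr (this i hi) rfl rfl)]
  simp

theorem ev_xor (h2 : (2 : R) = 0) (x : R) (n m : ℕ) : ev x (n ^^^ m) = ev x n + ev x m := by
  unfold ev
  rw [← Finset.sum_add_distrib]
  refine Finset.sum_congr rfl fun i _ => ?_
  rw [Nat.testBit_xor]
  cases n.testBit i <;> cases m.testBit i <;> simp
  linear_combination - x ^ i * h2

theorem ev_two_mul (x : R) (n : ℕ) (hn : n < 4096) : ev x (2 * n) = x * ev x n := by
  unfold ev
  rw [Finset.sum_range_succ', Finset.sum_range_succ (n := 12)]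
  have h12 : n.testBit 12 = false := Nat.testBit_lt_two_pow (by simpa using hn)
  have h0 : (2 * n).testBit 0 = false := by simp
  rw [h12, h0]
  simp only [Bool.false_eq_true, if_false, add_zero, Finset.mul_sum]
  refine Finset.sum_congr rfl fun i _ => ?_
  have : (2 * n).testBit (i + 1) = n.testBit i := by
    rw [Nat.testBit_succ]; simp
  rw [this]
  split_ifs
  · ring
  · simp

theorem ev_p (x : R) (hx : x ^ 12 + x ^ 6 + x ^ 4 + x + 1 = 0) : ev x 4179 = 0 := by
  unfold ev
  have : ∀ i ∈ Finset.range 13, (Nat.testBit 4179 i = true ↔ i = 0 ∨ i = 1 ∨ i = 4 ∨ i = 6 ∨ i = 12) := by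
    decide
  rw [Finset.sum_congr rfl (fun i hi => if_congr (this i hi) rfl rfl)]
  simp [Finset.sum_range_succ]
  linear_combination hx

theorem ev_step (h2 : (2 : R) = 0) (x : R) (hx : x ^ 12 + x ^ 6 + x ^ 4 + x + 1 = 0) (n : ℕ)
    (hn : n < 4096) : ev x (step n) = x * ev x n := by
  unfold step
  rw [ev_xor h2, ev_two_mul x n hn]
  have h : n >>> 11 = 0 ∨ n >>> 11 = 1 := by
    rw [Nat.shiftRight_eq_div_pow]; omega
  rcases h with h | h <;> rw [h]
  · simp [ev_zero]
  · simp [ev_p x hx]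

theorem ev_iterate (h2 : (2 : R) = 0) (x : R) (hx : x ^ 12 + x ^ 6 + x ^ 4 + x + 1 = 0) (k n : ℕ)
    (hn : n < 4096) : ev x (step^[k] n) = x ^ k * ev x n := by
  induction k generalizing n with
  | zero => simp
  | succ k ih =>
    rw [Function.iterate_succ_apply, ih _ (step_bd n hn).1, ev_step h2 x hx n hn]
    ring

theorem ev_pow (h2 : (2 : R) = 0) (x : R) (hx : x ^ 12 + x ^ 6 + x ^ 4 + x + 1 = 0) (k : ℕ) :
    ev x (step^[k] 1) = x ^ k := by
  rw [ev_iterate h2 x hx k 1 (by norm_num), ev_one, mul_one]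

theorem pow_4095 (h2 : (2 : R) = 0) (x : R) (hx : x ^ 12 + x ^ 6 + x ^ 4 + x + 1 = 0) :
    x ^ 4095 = 1 := by
  rw [← ev_pow h2 x hx, ← iter_eq, iter_4095, ev_one]

end ring

section field

variable {F : Type*} [Field F]

theorem exists_root [Fintype F] (hcard : Fintype.card F = 2 ^ 12) (h2 : (2 : F) = 0) :
    ∃ x : F, x ^ 12 + x ^ 6 + x ^ 4 + x + 1 = 0 := by
  let p : Polynomial F := .X ^ 12 + .X ^ 6 + .X ^ 4 + .X + 1
  have hdeg : p.degree = 12 := by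
    simp only [p]; compute_degree!
  have hr : (AdjoinRoot.root p) ^ 12 + (AdjoinRoot.root p) ^ 6 + (AdjoinRoot.root p) ^ 4
      + AdjoinRoot.root p + 1 = 0 := by
    have := AdjoinRoot.eval₂_root p
    simpa [p] using this
  have h2' : (2 : AdjoinRoot p) = 0 := by
    have := congrArg (AdjoinRoot.of p) h2
    rwa [map_ofNat, map_zero] at this
  have h1 := pow_4095 h2' _ hr
  have hdvd : p ∣ Polynomial.X ^ (Fintype.card F) - Polynomial.X := by
    rw [← AdjoinRoot.mk_eq_zero]
    simp only [map_sub, map_pow, AdjoinRoot.mk_X, hcard]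
    rw [show (2 : ℕ) ^ 12 = 4095 + 1 from rfl, pow_succ, h1, one_mul, sub_self]
  have hs : (Polynomial.X ^ (Fintype.card F) - Polynomial.X : Polynomial F).Splits := by
    rw [Polynomial.splits_iff_card_roots, FiniteField.roots_X_pow_card_sub_X,
      FiniteField.X_pow_card_sub_X_natDegree_eq F Fintype.one_lt_card]
    rfl
  have hs' : p.Splits := hs.of_dvd
    (FiniteField.X_pow_card_sub_X_ne_zero F Fintype.one_lt_card) hdvd
  obtain ⟨x, hx⟩ := hs'.exists_eval_eq_zero (by rw [hdeg]; norm_num)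
  exact ⟨x, by simpa [p] using hx⟩

theorem ev_ne_zero (h2 : (2 : F) = 0) (x : F) (hx : x ^ 12 + x ^ 6 + x ^ 4 + x + 1 = 0) (n : ℕ)
    (hn : n < 4096) (h : ev x n = 0) : n = 0 := by
  by_contra h0
  obtain ⟨j, rfl⟩ := surj n h0 hn
  rw [ev_pow h2 x hx] at h
  have := pow_4095 h2 x hx
  have hx0 : x = 0 := eq_zero_of_pow_eq_zero h
  simp [hx0] at this

theorem ev_inj (h2 : (2 : F) = 0) (x : F) (hx : x ^ 12 + x ^ 6 + x ^ 4 + x + 1 = 0) (n m : ℕ)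
    (hn : n < 4096) (hm : m < 4096) (h : ev x n = ev x m) : n = m := by
  have h1 : ev x (n ^^^ m) = 0 := by
    rw [ev_xor h2, h]; linear_combination ev x m * h2
  have := ev_ne_zero h2 x hx _ (Nat.xor_lt_two_pow (n := 12) hn hm) h1
  exact Nat.xor_eq_zero_iff.mp this

theorem ev_surj [Fintype F] (hcard : Fintype.card F = 2 ^ 12) (h2 : (2 : F) = 0) (x : F)
    (hx : x ^ 12 + x ^ 6 + x ^ 4 + x + 1 = 0) (y : F) : ∃ n < 4096, ev x n = y := by
  have h : (Finset.range 4096).image (ev x) = Finset.univ := by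
    apply Finset.eq_univ_of_card
    rw [Finset.card_image_of_injOn, Finset.card_range, hcard]
    · norm_num
    intro n hn m hm h
    exact ev_inj h2 x hx n m (by simpa using hn) (by simpa using hm) h
  have := Finset.mem_univ y
  rw [← h, Finset.mem_image] at this
  obtain ⟨n, hn, h⟩ := this
  exact ⟨n, by simpa using hn, h⟩

theorem exists_pow [Fintype F] (hcard : Fintype.card F = 2 ^ 12) (h2 : (2 : F) = 0) (x : F)
    (hx : x ^ 12 + x ^ 6 + x ^ 4 + x + 1 = 0) (y : F) (hy : y ≠ 0) : ∃ k : ℕ, y = x ^ k := by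
  obtain ⟨n, hn, h⟩ := ev_surj hcard h2 x hx y
  obtain ⟨j, hj⟩ := surj n (by rintro rfl; exact hy (by rw [← h, ev_zero])) hn
  exact ⟨j, by rw [← h, hj, ev_pow h2 x hx]⟩

/-- The connection set as a finset. -/
noncomputable def DF (x : F) : Finset F := L.toFinset.image (ev x)

theorem mem_DF (h2 : (2 : F) = 0) (x : F)
    (hx : x ^ 12 + x ^ 6 + x ^ 4 + x + 1 = 0) (y : F) :
    y ∈ DF x ↔ ∃ m : ℕ, (m % 45 = 0 ∨ m % 45 = 5 ∨ m % 45 = 10) ∧ y = x ^ m := by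
  unfold DF
  simp only [Finset.mem_image, List.mem_toFinset]
  constructor
  · rintro ⟨n, hn, rfl⟩
    obtain ⟨j, hj, r, hr, rfl⟩ := (mem_L n).mp hn
    exact ⟨45 * j + r, by omega, ev_pow h2 x hx _⟩
  · rintro ⟨m, hm, rfl⟩
    refine ⟨step^[m % 4095] 1, ?_, ?_⟩
    · rw [mem_L]
      refine ⟨m % 4095 / 45, by omega, m % 45, hm, ?_⟩
      congr 2
      omega
    · rw [ev_pow h2 x hx]
      conv_rhs => rw [← Nat.div_add_mod m 4095, pow_add, pow_mul, pow_4095 h2 x hx]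
      simp

theorem DF_card (h2 : (2 : F) = 0) (x : F)
    (hx : x ^ 12 + x ^ 6 + x ^ 4 + x + 1 = 0) : (DF x).card = L.length := by
  unfold DF
  rw [Finset.card_image_of_injOn, List.toFinset_card_of_nodup L_nodup]
  intro n hn m hm h
  exact ev_inj h2 x hx n m (L_lt n (by simpa using hn)).1 (L_lt m (by simpa using hm)).1 h

noncomputable def S (x z : F) : Finset F := (DF x).filter (fun a => a + z ∈ DF x)

theorem S_card_small (h2 : (2 : F) = 0) (x : F)
    (hx : x ^ 12 + x ^ 6 + x ^ 4 + x + 1 = 0) (i : ℕ) (hi : i < 45) :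
    (S x (x ^ i)).card = if i = 0 ∨ i = 5 ∨ i = 10 then 20 else 18 := by
  have hZ : Z.getD i 0 = step^[i] 1 := by rw [← Z_eq i hi, iter_eq]
  have hlt := (iterate_bd i 1 (by norm_num)).1
  have : S x (x ^ i) =
      (L.filter (fun a => M.testBit (a ^^^ Z.getD i 0))).toFinset.image (ev x) := by
    ext y
    simp only [S, Finset.mem_filter, Finset.mem_image, List.mem_toFinset, List.mem_filter,
      M_spec, hZ]
    constructor
    · rintro ⟨h1, h3⟩
      obtain ⟨n, hn, rfl⟩ := Finset.mem_image.mp h1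
      obtain ⟨m, hm, h4⟩ := Finset.mem_image.mp h3
      rw [List.mem_toFinset] at hn hm
      refine ⟨n, ⟨hn, ?_⟩, rfl⟩
      rw [← ev_pow h2 x hx i, ← ev_xor h2] at h4
      rw [← ev_inj h2 x hx _ _ (L_lt m hm).1
        (Nat.xor_lt_two_pow (n := 12) (L_lt n hn).1 hlt) h4]
      exact hm
    · rintro ⟨n, ⟨hn, h3⟩, rfl⟩
      refine ⟨Finset.mem_image_of_mem _ (List.mem_toFinset.mpr hn), ?_⟩
      rw [← ev_pow h2 x hx i, ← ev_xor h2]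
      exact Finset.mem_image_of_mem _ (List.mem_toFinset.mpr h3)
  rw [this, Finset.card_image_of_injOn, List.toFinset_card_of_nodup (L_nodup.filter _),
    count_eq i hi]
  intro n hn m hm h
  simp only [List.coe_toFinset, Set.mem_ofPred_eq, List.mem_filter] at hn hm
  exact ev_inj h2 x hx n m (L_lt n hn.1).1 (L_lt m hm.1).1 h

theorem mul_mem_DF (h2 : (2 : F) = 0) (x : F)
    (hx : x ^ 12 + x ^ 6 + x ^ 4 + x + 1 = 0) (t : ℕ) (y : F) (hy : y ∈ DF x) :
    x ^ (45 * t) * y ∈ DF x := by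
  rw [mem_DF h2 x hx] at hy ⊢
  obtain ⟨m, hm, rfl⟩ := hy
  exact ⟨45 * t + m, by omega, by rw [pow_add]⟩

theorem S_card (h2 : (2 : F) = 0) (x : F)
    (hx : x ^ 12 + x ^ 6 + x ^ 4 + x + 1 = 0) (m : ℕ) :
    (S x (x ^ m)).card = if m % 45 = 0 ∨ m % 45 = 5 ∨ m % 45 = 10 then 20 else 18 := by
  rw [← S_card_small h2 x hx (m % 45) (Nat.mod_lt _ (by norm_num))]
  set t := m / 45
  have hm : x ^ m = x ^ (45 * t) * x ^ (m % 45) := by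
    rw [← pow_add, Nat.div_add_mod]
  have hinv : x ^ (45 * t) * x ^ (45 * (90 * t)) = 1 := by
    rw [← pow_add, show 45 * t + 45 * (90 * t) = 4095 * t by ring, pow_mul, pow_4095 h2 x hx,
      one_pow]
  symm
  refine Finset.card_bij' (fun a _ => x ^ (45 * t) * a) (fun a _ => x ^ (45 * (90 * t)) * a)
    ?_ ?_ ?_ ?_
  · intro a ha
    simp only [S, Finset.mem_filter] at ha ⊢
    refine ⟨mul_mem_DF h2 x hx _ _ ha.1, ?_⟩
    rw [hm, ← mul_add]
    exact mul_mem_DF h2 x hx _ _ ha.2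
  · intro a ha
    simp only [S, Finset.mem_filter] at ha ⊢
    refine ⟨mul_mem_DF h2 x hx _ _ ha.1, ?_⟩
    have := mul_mem_DF h2 x hx (90 * t) _ ha.2
    rw [hm] at this
    convert this using 1
    linear_combination (- x ^ (m % 45)) * hinv
  · intro a _
    linear_combination a * hinv
  · intro a _
    linear_combination a * hinv

theorem x_ne_zero (x : F) (hx : x ^ 12 + x ^ 6 + x ^ 4 + x + 1 = 0) : x ≠ 0 := by
  rintro rfl
  simp at hx

theorem S_card_of_mem (h2 : (2 : F) = 0) (x : F)
    (hx : x ^ 12 + x ^ 6 + x ^ 4 + x + 1 = 0) (z : F) (hz : z ∈ DF x) : (S x z).card = 20 := by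
  obtain ⟨m, hm, rfl⟩ := (mem_DF h2 x hx z).mp hz
  rw [S_card h2 x hx, if_pos hm]

theorem S_card_of_not_mem [Fintype F] (hcard : Fintype.card F = 2 ^ 12) (h2 : (2 : F) = 0) (x : F)
    (hx : x ^ 12 + x ^ 6 + x ^ 4 + x + 1 = 0) (z : F) (h0 : z ≠ 0) (hz : z ∉ DF x) :
    (S x z).card = 18 := by
  obtain ⟨m, rfl⟩ := exists_pow hcard h2 x hx z h0
  rw [S_card h2 x hx, if_neg]
  exact fun hm => hz ((mem_DF h2 x hx _).mpr ⟨m, hm, rfl⟩)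

theorem srg [Fintype F] (hcard : Fintype.card F = 2 ^ 12) (h2 : (2 : F) = 0) (x : F)
    (hx : x ^ 12 + x ^ 6 + x ^ 4 + x + 1 = 0) (D : Set F) (hD : D = DF x) :
    (cayley D).IsSRGWith (Fintype.card F) L.length 20 18 := by
  have hneg : ∀ a : F, -a = a := fun a => by linear_combination (-a) * h2
  have hadj : ∀ v w, (cayley D).Adj v w ↔ w - v ∈ DF x := by
    intro v w
    have h0 : (0 : F) ∉ DF x := by
      intro h
      obtain ⟨m, _, h⟩ := (mem_DF h2 x hx 0).mp h
      exact pow_ne_zero m (x_ne_zero x hx) h.symm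
    have hs : v - w = w - v := by rw [← hneg (v - w)]; ring
    simp only [cayley, SimpleGraph.fromRel_adj, hD, hs, or_self, Finset.mem_coe]
    refine ⟨fun h => h.2, fun h => ⟨?_, h⟩⟩
    rintro rfl
    exact h0 (by simpa using h)
  have hcn : ∀ v w, Fintype.card ((cayley D).commonNeighbors v w) = (S x (w - v)).card := by
    intro v w
    rw [← Set.toFinset_card]
    symm
    refine Finset.card_bij' (fun a _ => v + a) (fun a _ => a - v) ?_ ?_ ?_ ?_
    · intro a ha
      simp only [S, Finset.mem_filter] at ha
      rw [Set.mem_toFinset, SimpleGraph.mem_commonNeighbors, hadj, hadj]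
      refine ⟨by simpa using ha.1, ?_⟩
      convert ha.2 using 1
      linear_combination (v - w) * h2
    · intro a ha
      rw [Set.mem_toFinset, SimpleGraph.mem_commonNeighbors, hadj, hadj] at ha
      simp only [S, Finset.mem_filter]
      refine ⟨ha.1, ?_⟩
      convert ha.2 using 1
      linear_combination (w - v) * h2
    · intro a _
      ring
    · intro a _
      ring
  refine ⟨rfl, ?_, ?_, ?_⟩
  · intro v
    rw [← DF_card h2 x hx, ← SimpleGraph.card_neighborFinset_eq_degree]
    symm
    refine Finset.card_bij' (fun a _ => v + a) (fun a _ => a - v) ?_ ?_ ?_ ?_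
    · intro a ha
      rw [SimpleGraph.mem_neighborFinset, hadj]
      simpa using ha
    · intro a ha
      rw [SimpleGraph.mem_neighborFinset, hadj] at ha
      exact ha
    · intro a _
      ring
    · intro a _
      ring
  · intro v w h
    rw [hcn]
    exact S_card_of_mem h2 x hx _ ((hadj v w).mp h)
  · intro v w hvw h
    rw [hcn]
    exact S_card_of_not_mem hcard h2 x hx _ (sub_ne_zero.mpr (Ne.symm hvw))
      (fun h' => h ((hadj v w).mpr h'))

theorem frob (h2 : (2 : F) = 0) (s : ℕ) (x : F)
    (hx : x ^ 12 + x ^ 6 + x ^ 4 + x + 1 = 0) :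
    (x ^ 2 ^ s) ^ 12 + (x ^ 2 ^ s) ^ 6 + (x ^ 2 ^ s) ^ 4 + (x ^ 2 ^ s) + 1 = 0 := by
  induction s with
  | zero => simpa using hx
  | succ s ih =>
    rw [pow_succ 2 s, pow_mul]
    generalize x ^ 2 ^ s = y at ih
    have h : (y ^ 12 + y ^ 6 + y ^ 4 + y + 1) ^ 2 = 0 := by rw [ih]; simp
    linear_combination h - (y ^ 12 * (y ^ 6 + y ^ 4 + y + 1) + y ^ 6 * (y ^ 4 + y + 1)
      + y ^ 4 * (y + 1) + y) * h2

theorem cyc_sub (γ β : Fˣ) (b : ℤ) (h : γ = β ^ (1 + 9 * b)) (j : ℕ) :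
    cycClass γ 45 (5 * j) ⊆ cycClass β 45 (5 * j) := by
  rintro x ⟨k, rfl⟩
  refine ⟨k + b * j + 9 * b * k, ?_⟩
  rw [h, ← zpow_mul]
  congr 2
  push_cast
  ring

theorem exists_good [Fintype F] (hcard : Fintype.card F = 2 ^ 12) (h2 : (2 : F) = 0)
    (γ : Fˣ) (hγ : ∀ x : Fˣ, x ∈ Subgroup.zpowers γ) :
    ∃ β : Fˣ, (β : F) ^ 12 + (β : F) ^ 6 + (β : F) ^ 4 + β + 1 = 0 ∧
      (∃ b : ℤ, γ = β ^ (1 + 9 * b)) ∧ (∃ d : ℤ, β = γ ^ (1 + 9 * d)) := by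
  obtain ⟨x, hx⟩ := exists_root hcard h2
  set α : Fˣ := Units.mk0 x (x_ne_zero x hx) with hα
  obtain ⟨a, ha⟩ := exists_pow hcard h2 x hx γ γ.ne_zero
  have hγa : γ = α ^ a := Units.ext (by simpa [hα] using ha)
  obtain ⟨c, hc⟩ := Subgroup.mem_zpowers_iff.mp (hγ α)
  have hord : orderOf γ = 4095 := by
    rw [orderOf_eq_card_of_forall_mem_zpowers hγ, Nat.card_eq_fintype_card, Fintype.card_units,
      hcard]
    norm_num
  have h1 : γ ^ (c * a - 1) = 1 := by
    rw [zpow_sub, zpow_mul, hc, zpow_natCast, ← hγa]; simp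
  have h3 : (4095 : ℤ) ∣ c * a - 1 := by
    have := orderOf_dvd_iff_zpow_eq_one.mpr h1
    rwa [hord] at this
  have h9 : (9 : ℤ) ∣ c * a - 1 := Dvd.dvd.trans (by norm_num) h3
  have hα4095 : α ^ 4095 = 1 := Units.ext (by simpa [hα] using pow_4095 h2 x hx)
  have key : ∀ s ≤ 12, (9 : ℤ) ∣ (2 ^ s : ℤ) - a → ∃ β : Fˣ,
      (β : F) ^ 12 + (β : F) ^ 6 + (β : F) ^ 4 + β + 1 = 0 ∧
      (∃ b : ℤ, γ = β ^ (1 + 9 * b)) ∧ (∃ d : ℤ, β = γ ^ (1 + 9 * d)) := by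
    intro s hs hsa
    refine ⟨α ^ 2 ^ s, by simpa [hα] using frob h2 s x hx, ?_, ?_⟩
    · obtain ⟨u, hu⟩ := hsa
      have hpow : (2 : ℤ) ^ s * 2 ^ (12 - s) = 4096 := by
        rw [← pow_add, Nat.add_sub_cancel' hs]; norm_num
      refine ⟨455 - u * 2 ^ (12 - s), ?_⟩
      have h5 : (1 : ℤ) + 9 * (455 - u * 2 ^ (12 - s)) = a * 2 ^ (12 - s) := by
        linear_combination hu * 2 ^ (12 - s) - hpow
      rw [h5]
      have h6 : (α ^ 2 ^ s) ^ ((a : ℤ) * 2 ^ (12 - s)) = α ^ ((4096 : ℤ) * a) := by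
        rw [← zpow_natCast, ← zpow_mul]
        congr 1
        push_cast
        linear_combination (a : ℤ) * hpow
      have h7 : α ^ (4096 : ℤ) = α := by
        rw [show (4096 : ℤ) = 4095 + 1 by norm_num, zpow_add, zpow_one]
        rw [show (4095 : ℤ) = ((4095 : ℕ) : ℤ) by norm_num, zpow_natCast, hα4095, one_mul]
      rw [h6, zpow_mul, h7, zpow_natCast, hγa]
    · obtain ⟨u, hu⟩ := hsa
      obtain ⟨w, hw⟩ := h9
      refine ⟨w + c * u, ?_⟩
      rw [← hc, ← zpow_natCast, ← zpow_mul]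
      congr 1
      push_cast
      linear_combination c * hu + hw
  have hmod : (c % 9) * ((a : ℤ) % 9) % 9 = 1 := by
    rw [← Int.mul_emod]; omega
  have hc0 : 0 ≤ c % 9 := Int.emod_nonneg _ (by norm_num)
  have hc9 : c % 9 < 9 := Int.emod_lt_of_pos _ (by norm_num)
  have ha0 : 0 ≤ (a : ℤ) % 9 := Int.emod_nonneg _ (by norm_num)
  have ha9 : (a : ℤ) % 9 < 9 := Int.emod_lt_of_pos _ (by norm_num)
  have hcases : (a : ℤ) % 9 = 1 ∨ (a : ℤ) % 9 = 2 ∨ (a : ℤ) % 9 = 4 ∨ (a : ℤ) % 9 = 8 ∨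
      (a : ℤ) % 9 = 7 ∨ (a : ℤ) % 9 = 5 := by
    generalize c % 9 = C at *
    generalize (a : ℤ) % 9 = A at *
    interval_cases A <;> omega
  rcases hcases with h | h | h | h | h | h
  · exact key 0 (by norm_num) (by norm_num; omega)
  · exact key 1 (by norm_num) (by norm_num; omega)
  · exact key 2 (by norm_num) (by norm_num; omega)
  · exact key 3 (by norm_num) (by norm_num; omega)
  · exact key 4 (by norm_num) (by norm_num; omega)
  · exact key 5 (by norm_num) (by norm_num; omega)

theorem cyc_eq_DF (h2 : (2 : F) = 0) (β : Fˣ)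
    (hx : (β : F) ^ 12 + (β : F) ^ 6 + (β : F) ^ 4 + β + 1 = 0) :
    cycClass β 45 0 ∪ cycClass β 45 5 ∪ cycClass β 45 10 = (DF (β : F) : Set F) := by
  have hβ : β ^ 4095 = 1 := Units.ext (by simpa using pow_4095 h2 _ hx)
  have key : ∀ i : ℕ, ∀ y : F, y ∈ cycClass β 45 i ↔ ∃ t : ℕ, y = (β : F) ^ (i + 45 * t) := by
    intro i y
    constructor
    · rintro ⟨k, rfl⟩
      refine ⟨(k % 91).toNat, ?_⟩
      have hk : ((k % 91).toNat : ℤ) = k % 91 := Int.toNat_of_nonneg (Int.emod_nonneg _ (by norm_num))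
      rw [← Units.val_pow_eq_pow_val]
      congr 1
      rw [← zpow_natCast]
      have : ((i : ℤ) + (45 : ℕ) * k) = 4095 * (k / 91) + ((i + 45 * (k % 91).toNat : ℕ) : ℤ) := by
        push_cast
        rw [hk]
        omega
      rw [this, zpow_add, zpow_mul, show (4095 : ℤ) = ((4095 : ℕ) : ℤ) by norm_num,
        zpow_natCast β 4095, hβ]
      simp
    · rintro ⟨t, rfl⟩
      refine ⟨t, ?_⟩
      rw [← Units.val_pow_eq_pow_val, ← zpow_natCast]
      push_cast
      rfl
  ext y
  rw [Finset.mem_coe, mem_DF h2 _ hx, Set.mem_union, Set.mem_union, key, key, key]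
  constructor
  · rintro ((⟨t, h⟩ | ⟨t, h⟩) | ⟨t, h⟩)
    · exact ⟨_, by omega, h⟩
    · exact ⟨_, by omega, h⟩
    · exact ⟨_, by omega, h⟩
  · rintro ⟨m, h | h | h, rfl⟩
    · exact Or.inl (Or.inl ⟨m / 45, by congr 1; omega⟩)
    · exact Or.inl (Or.inr ⟨m / 45, by congr 1; omega⟩)
    · exact Or.inr ⟨m / 45, by congr 1; omega⟩

end field

end DeLange

/-- De Lange's example: `q = 2¹²`, `N = 45`, `D = C₀ ∪ C₅ ∪ C₁₀` gives a
strongly regular Cayley graph. -/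
theorem statement_18 (F : Type*) [Field F] [Fintype F] (hcard : Fintype.card F = 2 ^ 12)
    (γ : Fˣ) (hγ : ∀ x : Fˣ, x ∈ Subgroup.zpowers γ)
    (D : Set F) (hD : D = cycClass γ 45 0 ∪ cycClass γ 45 5 ∪ cycClass γ 45 10) :
    ∃ k lam mu : ℕ, (cayley D).IsSRGWith (Fintype.card F) k lam mu := by
  have h2 : (2 : F) = 0 := by
    have h : ((Fintype.card F : ℕ) : F) = 0 := Nat.cast_card_eq_zero F
    rw [hcard] at h
    rw [Nat.cast_pow] at h
    exact_mod_cast eq_zero_of_pow_eq_zero h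
  obtain ⟨β, hβ, ⟨b, hb⟩, ⟨d, hd⟩⟩ := DeLange.exists_good hcard h2 γ hγ
  have hcyc : ∀ j : ℕ, cycClass γ 45 (5 * j) = cycClass β 45 (5 * j) := fun j =>
    Set.Subset.antisymm (DeLange.cyc_sub γ β b hb j) (DeLange.cyc_sub β γ d hd j)
  have e0 := hcyc 0
  have e1 := hcyc 1
  have e2 := hcyc 2
  norm_num at e0 e1 e2
  rw [e0, e1, e2, DeLange.cyc_eq_DF h2 β hβ] at hD
  refine ⟨DeLange.L.length, 20, 18, ?_⟩
  convert DeLange.srg hcard h2 (β : F) hβ D hD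
end

section
/- Let q = 2^{20} and N = 75. For any primitive element γ of F_q, let C_i = γ^i⟨γ^{75}⟩ (0 ≤ i ≤ 74) be the cyclotomic classes of order 75 of F_q, and let D = C₀ ∪ C₃ ∪ C₆ ∪ C₉ ∪ C₁₂. Then the Cayley graph Cay(F_q, D) is a strongly regular graph. -/
open scoped Classical

namespace IM

/-- Forces kernel evaluation of `n` before continuing. -/
def force {α : Type} (n : ℕ) (k : ℕ → α) : α :=
  Nat.rec (k 0) (fun m _ => k (Nat.succ m)) n

theorem force_eq {α : Type} (n : ℕ) (k : ℕ → α) : force n k = k n := by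
  cases n <;> rfl

/-- Forced iteration. -/
def iterF (f : ℕ → ℕ) (k : ℕ) : ℕ → ℕ :=
  Nat.rec (fun w => w) (fun _ ih w => force (f w) ih) k

theorem iterF_eq (f : ℕ → ℕ) (k : ℕ) : iterF f k = f^[k] := by
  induction k with
  | zero => rfl
  | succ k ih =>
    funext w
    show force (f w) (iterF f k) = _
    rw [force_eq, ih, Function.iterate_succ_apply]

/-- Multiplication by `x` modulo `x^20+x^12+x^8+x^6+x^4+x^3+1` on the low 20 bits; the bits above
count the number of reductions. -/
def step (w : ℕ) : ℕ :=
  cond (Nat.blt (w % 1048576) 524288) (w + w % 1048576) (Nat.xor (w + w % 1048576) 4441)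

def mulN (a : ℕ) (k : ℕ) : ℕ → ℕ :=
  Nat.rec (fun _ => 0) (fun _ ih b => force (ih (b / 2)) fun r =>
    force (step r % 1048576) fun s => cond (Nat.beq (b % 2) 1) (Nat.xor s a) s) k

def powN (k : ℕ) : ℕ → ℕ → ℕ :=
  Nat.rec (fun _ _ => 1) (fun _ ih a e => force (mulN a 20 a) fun a2 =>
    force (ih a2 (e / 2)) fun r => cond (Nat.beq (e % 2) 1) (mulN a 20 r) r) k

def trN (k : ℕ) : ℕ → ℕ :=
  Nat.rec (fun _ => 0) (fun _ ih a => force (mulN a 20 a) fun a2 => Nat.xor (ih a2) a) k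

def cntAll (w : ℕ) : ℕ := iterF (iterF step 451) 31 w

theorem cntAll_eq (w : ℕ) : cntAll w = step^[13981] w := by
  unfold cntAll
  rw [iterF_eq, iterF_eq, ← Function.iterate_mul]

theorem c0 : cntAll 4 = 6720 * 1048576 + 4 := by decide +kernel
theorem c1 : cntAll 81148 = 6976 * 1048576 + 81148 := by decide +kernel
theorem c3 : cntAll 422826 = 7024 * 1048576 + 422826 := by decide +kernel
theorem c5 : cntAll 872745 = 6880 * 1048576 + 872745 := by decide +kernel
theorem c7 : cntAll 690310 = 6992 * 1048576 + 690310 := by decide +kernel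
theorem c15 : cntAll 764141 = 6976 * 1048576 + 764141 := by decide +kernel
theorem c25 : cntAll 100568 = 6880 * 1048576 + 100568 := by decide +kernel
theorem c35 : cntAll 205025 = 7136 * 1048576 + 205025 := by decide +kernel

theorem pw75 : powN 20 20287 75 = 2 := by decide +kernel
theorem pwx : powN 20 2 13981 = 1 := by decide +kernel
theorem q3 : mulN (Nat.xor (powN 20 20287 (1048575 / 3)) 1) 20 790015 = 1 := by decide +kernel
theorem q5 : mulN (Nat.xor (powN 20 20287 (1048575 / 5)) 1) 20 263494 = 1 := by decide +kernel
theorem q11 : mulN (Nat.xor (powN 20 20287 (1048575 / 11)) 1) 20 874744 = 1 := by decide +kernel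
theorem q31 : mulN (Nat.xor (powN 20 20287 (1048575 / 31)) 1) 20 49109 = 1 := by decide +kernel
theorem q41 : mulN (Nat.xor (powN 20 20287 (1048575 / 41)) 1) 20 122163 = 1 := by decide +kernel
theorem trc : ∀ i < 20, trN 20 (mulN 263254 20 (2 ^ i)) = if i = 19 then 1 else 0 := by
  decide +kernel
theorem cinv : mulN 263254 20 4 = 1 := by decide +kernel
theorem st1 : mulN (powN 20 20287 1) 20 4 = 81148 := by decide +kernel
theorem st3 : mulN (powN 20 20287 3) 20 4 = 422826 := by decide +kernel
theorem st5 : mulN (powN 20 20287 5) 20 4 = 872745 := by decide +kernel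
theorem st7 : mulN (powN 20 20287 7) 20 4 = 690310 := by decide +kernel
theorem st15 : mulN (powN 20 20287 15) 20 4 = 764141 := by decide +kernel
theorem st25 : mulN (powN 20 20287 25) 20 4 = 100568 := by decide +kernel
theorem st35 : mulN (powN 20 20287 35) 20 4 = 205025 := by decide +kernel

/-! ### Evaluation in a ring of characteristic two -/

def ev {R : Type*} [CommRing R] (x : R) (n : ℕ) : R :=
  ∑ i ∈ Finset.range 20, if n.testBit i then x ^ i else 0

section ring
variable {R : Type*} [CommRing R] (x : R)

theorem add_self' (h2 : (2 : R) = 0) (a : R) : a + a = 0 := by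
  rw [← two_mul, h2, zero_mul]

theorem ev_zero : ev x 0 = 0 := by simp [ev]

theorem ev_one : ev x 1 = 1 := by
  unfold ev
  rw [Finset.sum_eq_single 0] <;> simp +contextual [Nat.testBit_one_eq_true_iff_self_eq_zero]

theorem ev_two_pow (i : ℕ) (hi : i < 20) : ev x (2 ^ i) = x ^ i := by
  unfold ev
  simp only [Nat.testBit_two_pow, decide_eq_true_eq]
  simp [hi]

theorem ev_xor (h2 : (2 : R) = 0) (a b : ℕ) : ev x (Nat.xor a b) = ev x a + ev x b := by
  unfold ev
  rw [← Finset.sum_add_distrib]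
  refine Finset.sum_congr rfl fun i _ => ?_
  have : Nat.xor a b = a ^^^ b := rfl
  rw [this, Nat.testBit_xor]
  cases a.testBit i <;> cases b.testBit i <;> simp [add_self' h2]

theorem ev_mod (n : ℕ) : ev x (n % 1048576) = ev x n := by
  unfold ev
  refine Finset.sum_congr rfl fun i hi => ?_
  have : (1048576 : ℕ) = 2 ^ 20 := by norm_num
  rw [this, Nat.testBit_mod_two_pow]
  simp [Finset.mem_range.1 hi]

theorem ev_two_mul (h2 : (2 : R) = 0) (n : ℕ) :
    ev x (2 * n) = x * ev x n + if n.testBit 19 then x ^ 20 else 0 := by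
  unfold ev
  rw [Finset.sum_range_succ', Finset.sum_range_succ (n := 19), mul_add, Finset.mul_sum]
  have h0 : (2 * n).testBit 0 = false := by simp
  have h1 : ∀ i, (2 * n).testBit (i + 1) = n.testBit i := by
    intro i; rw [Nat.testBit_succ]; simp
  simp only [h0, h1]
  have : ∀ i, (if n.testBit i then x ^ (i + 1) else 0) = x * (if n.testBit i then x ^ i else 0) := by
    intro i; split_ifs <;> ring
  simp only [this]
  cases n.testBit 19
  · simp
  · simp only [if_true]
    have := add_self' h2 (x ^ 20)
    simp only [Bool.false_eq_true, if_false, add_zero]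
    rw [add_assoc, ← pow_succ', this, add_zero]

theorem ev_4441 : ev x 4441 = x ^ 12 + x ^ 8 + x ^ 6 + x ^ 4 + x ^ 3 + 1 := by
  unfold ev
  simp only [Finset.sum_range_succ, Finset.sum_range_zero]
  simp [Nat.testBit]
  ring

theorem testBit19 (n : ℕ) : n.testBit 19 = !(Nat.blt (n % 1048576) 524288) := by
  have : n.testBit 19 = (n % 2 ^ 20).testBit 19 := by
    rw [Nat.testBit_mod_two_pow]; rfl
  rw [this]
  norm_num
  generalize hm : n % 1048576 = m
  have hm' : m < 1048576 := by omega
  rw [Nat.testBit_eq_decide_div_mod_eq]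
  by_cases h : m < 524288
  · have : Nat.blt m 524288 = true := by simpa [Nat.blt_eq] using h
    rw [this]; simp; omega
  · have : Nat.blt m 524288 = false := by
      rw [Bool.eq_false_iff]; simpa [Nat.blt_eq] using h
    rw [this]; simp; omega

theorem ev_step (h2 : (2 : R) = 0) (hx : x ^ 20 = x ^ 12 + x ^ 8 + x ^ 6 + x ^ 4 + x ^ 3 + 1)
    (w : ℕ) : ev x (step w) = x * ev x w := by
  have h1 : ev x (w + w % 1048576) = ev x (2 * w) := by
    rw [← ev_mod, ← ev_mod x (2 * w)]; congr 1; omega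
  have h3 := ev_two_mul x h2 w
  rw [testBit19] at h3
  unfold step
  cases h : Nat.blt (w % 1048576) 524288
  · rw [h] at h3
    simp only [cond_false, ev_xor x h2, h1, ev_4441, ← hx, h3]
    simp [add_assoc, add_self' h2]
  · rw [h] at h3
    simp only [cond_true, h1, h3]
    simp

theorem ev_mulN_aux (h2 : (2 : R) = 0)
    (hx : x ^ 20 = x ^ 12 + x ^ 8 + x ^ 6 + x ^ 4 + x ^ 3 + 1) (a k : ℕ) : ∀ b,
    ev x (mulN a k b) = ev x a * ∑ i ∈ Finset.range k, if b.testBit i then x ^ i else 0 := by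
  induction k with
  | zero => intro b; simp [mulN, ev_zero]
  | succ k ih =>
    intro b
    have e : mulN a (k + 1) b = cond (Nat.beq (b % 2) 1) (Nat.xor (step (mulN a k (b / 2)) % 1048576) a)
      (step (mulN a k (b / 2)) % 1048576) := by
      show (force (mulN a k (b / 2)) fun r => force (step r % 1048576) fun s =>
        cond (Nat.beq (b % 2) 1) (Nat.xor s a) s) = _
      rw [force_eq, force_eq]
    rw [e, Finset.sum_range_succ']
    have h1 : ev x (step (mulN a k (b / 2)) % 1048576) =
        ev x a * ∑ i ∈ Finset.range k, if b.testBit (i + 1) then x ^ (i + 1) else 0 := by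
      rw [ev_mod, ev_step x h2 hx, ih, mul_left_comm, Finset.mul_sum]
      congr 1
      refine Finset.sum_congr rfl fun i _ => ?_
      rw [Nat.testBit_succ]
      split_ifs <;> ring
    have hb : b.testBit 0 = Nat.beq (b % 2) 1 := by
      rw [Nat.testBit_zero]
      rcases Nat.mod_two_eq_zero_or_one b with h | h <;> rw [h] <;> rfl
    rw [hb]
    cases Nat.beq (b % 2) 1
    · simp [h1]
    · simp only [cond_true, if_true, ev_xor x h2, h1, mul_add, pow_zero, mul_one]

theorem ev_mulN (h2 : (2 : R) = 0)
    (hx : x ^ 20 = x ^ 12 + x ^ 8 + x ^ 6 + x ^ 4 + x ^ 3 + 1) (a b : ℕ) :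
    ev x (mulN a 20 b) = ev x a * ev x b := ev_mulN_aux x h2 hx a 20 b

theorem ev_powN (h2 : (2 : R) = 0)
    (hx : x ^ 20 = x ^ 12 + x ^ 8 + x ^ 6 + x ^ 4 + x ^ 3 + 1) (k : ℕ) : ∀ a e, e < 2 ^ k →
    ev x (powN k a e) = ev x a ^ e := by
  induction k with
  | zero =>
    intro a e he
    have : e = 0 := by simpa using he
    subst this
    simp [powN, ev_one]
  | succ k ih =>
    intro a e he
    have e1 : powN (k + 1) a e = cond (Nat.beq (e % 2) 1)
      (mulN a 20 (powN k (mulN a 20 a) (e / 2))) (powN k (mulN a 20 a) (e / 2)) := by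
      show (force (mulN a 20 a) fun a2 => force (powN k a2 (e / 2)) fun r =>
        cond (Nat.beq (e % 2) 1) (mulN a 20 r) r) = _
      rw [force_eq, force_eq]
    have h1 : ev x (powN k (mulN a 20 a) (e / 2)) = ev x a ^ (2 * (e / 2)) := by
      rw [ih _ _ (by rw [pow_succ] at he; omega), ev_mulN x h2 hx, pow_mul, sq]
    rw [e1]
    rcases Nat.mod_two_eq_zero_or_one e with h | h
    · rw [h]
      show ev x (powN k (mulN a 20 a) (e / 2)) = _
      rw [h1]; congr 1; omega
    · rw [h]
      show ev x (mulN a 20 (powN k (mulN a 20 a) (e / 2))) = _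
      rw [ev_mulN x h2 hx, h1, ← pow_succ']; congr 1; omega

theorem ev_trN (h2 : (2 : R) = 0)
    (hx : x ^ 20 = x ^ 12 + x ^ 8 + x ^ 6 + x ^ 4 + x ^ 3 + 1) (k : ℕ) : ∀ a,
    ev x (trN k a) = ∑ i ∈ Finset.range k, ev x a ^ (2 ^ i) := by
  induction k with
  | zero => intro a; simp [trN, ev_zero]
  | succ k ih =>
    intro a
    have e1 : trN (k + 1) a = Nat.xor (trN k (mulN a 20 a)) a := by
      show (force (mulN a 20 a) fun a2 => Nat.xor (trN k a2) a) = _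
      rw [force_eq]
    rw [e1, ev_xor x h2, ih, Finset.sum_range_succ', ev_mulN x h2 hx]
    simp only [pow_zero, pow_one, ← pow_two]
    congr 1
    refine Finset.sum_congr rfl fun i _ => ?_
    rw [← pow_mul, pow_succ']

end ring

section field
variable {F : Type*} [Field F] [Fintype F]

theorem two_eq_zero (hcard : Fintype.card F = 2 ^ 20) : (2 : F) = 0 := by
  have h := FiniteField.cast_card_eq_zero F
  rw [hcard] at h
  rw [Nat.cast_pow] at h
  exact_mod_cast (pow_eq_zero_iff (n := 20) (by norm_num)).1 h

open Polynomial in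
theorem exists_root (hcard : Fintype.card F = 2 ^ 20) :
    ∃ x : F, x ^ 20 = x ^ 12 + x ^ 8 + x ^ 6 + x ^ 4 + x ^ 3 + 1 := by
  have h2 := two_eq_zero hcard
  let P : F[X] := X ^ 20 - (X ^ 12 + X ^ 8 + X ^ 6 + X ^ 4 + X ^ 3 + 1)
  have hdeg : P.natDegree = 20 := by
    show (X ^ 20 - (X ^ 12 + X ^ 8 + X ^ 6 + X ^ 4 + X ^ 3 + 1) : F[X]).natDegree = 20
    compute_degree!
  let x := AdjoinRoot.root P
  have h2' : (2 : AdjoinRoot P) = 0 := by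
    have := congrArg (algebraMap F (AdjoinRoot P)) h2
    rwa [map_ofNat, map_zero] at this
  have hx : x ^ 20 = x ^ 12 + x ^ 8 + x ^ 6 + x ^ 4 + x ^ 3 + 1 := by
    have : AdjoinRoot.mk P P = 0 := AdjoinRoot.mk_self
    have h3 : AdjoinRoot.mk P P = x ^ 20 - (x ^ 12 + x ^ 8 + x ^ 6 + x ^ 4 + x ^ 3 + 1) := by
      conv_lhs => arg 2; change X ^ 20 - (X ^ 12 + X ^ 8 + X ^ 6 + X ^ 4 + X ^ 3 + 1)
      simp only [map_sub, map_add, map_pow, map_one, AdjoinRoot.mk_X]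
      rfl
    rw [h3] at this
    exact sub_eq_zero.1 this
  have h1 : x ^ 13981 = 1 := by
    have := ev_powN x h2' hx 20 2 13981 (by norm_num)
    rw [pwx, ev_one] at this
    have h4 := ev_two_pow x 1 (by norm_num)
    rw [pow_one, pow_one] at h4
    rw [this, h4]
  have h5 : x ^ (2 ^ 20) = x := by
    have : 2 ^ 20 = 13981 * 75 + 1 := by norm_num
    rw [this, pow_add, pow_mul, h1, one_pow, one_mul, pow_one]
  have hdvd : P ∣ X ^ (Fintype.card F) - X := by
    rw [← AdjoinRoot.mk_eq_zero, hcard]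
    simp only [map_sub, map_pow, AdjoinRoot.mk_X]
    exact sub_eq_zero.2 h5
  have hne : (X ^ (Fintype.card F) - X : F[X]) ≠ 0 :=
    FiniteField.X_pow_card_sub_X_ne_zero F (by rw [hcard]; norm_num)
  have hs : (X ^ (Fintype.card F) - X : F[X]).Splits := by
    rw [Polynomial.splits_iff_card_roots, FiniteField.roots_X_pow_card_sub_X,
      FiniteField.X_pow_card_sub_X_natDegree_eq F (by rw [hcard]; norm_num)]
    rfl
  have hPs : P.Splits := hs.of_dvd hne hdvd
  obtain ⟨a, ha⟩ := hPs.exists_eval_eq_zero (by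
    rw [Polynomial.degree_eq_natDegree (by intro h; rw [h] at hdeg; simp at hdeg), hdeg]; norm_num)
  refine ⟨a, sub_eq_zero.1 ?_⟩
  have h6 : P.eval a = a ^ 20 - (a ^ 12 + a ^ 8 + a ^ 6 + a ^ 4 + a ^ 3 + 1) := by
    show (X ^ 20 - (X ^ 12 + X ^ 8 + X ^ 6 + X ^ 4 + X ^ 3 + 1) : F[X]).eval a = _
    simp
  rw [← h6, ha]

def tr (y : F) : F := ∑ i ∈ Finset.range 20, y ^ (2 ^ i)

noncomputable def psi (y : F) : ℤ := if tr y = 0 then 1 else -1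

theorem tr_zero : tr (0 : F) = 0 := by
  unfold tr
  exact Finset.sum_eq_zero fun i _ => zero_pow (by positivity)

theorem tr_add (hcard : Fintype.card F = 2 ^ 20) (a b : F) : tr (a + b) = tr a + tr b := by
  have : CharP F 2 := CharTwo.of_one_ne_zero_of_two_eq_zero one_ne_zero (two_eq_zero hcard)
  unfold tr
  rw [← Finset.sum_add_distrib]
  exact Finset.sum_congr rfl fun i _ => add_pow_char_pow a b 2 i

theorem tr_sq (hcard : Fintype.card F = 2 ^ 20) (a : F) : tr (a ^ 2) = tr a := by
  unfold tr
  rw [Finset.sum_range_succ, Finset.sum_range_succ' (n := 19)]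
  have h : a ^ (2 ^ 20) = a := by rw [← hcard]; exact FiniteField.pow_card a
  congr 1
  · refine Finset.sum_congr rfl fun i _ => ?_
    rw [← pow_mul, pow_succ']
  · rw [← pow_mul, ← pow_succ', h]; simp

theorem tr_sq' (hcard : Fintype.card F = 2 ^ 20) (a : F) : tr (a ^ 2) = tr a ^ 2 := by
  have : CharP F 2 := CharTwo.of_one_ne_zero_of_two_eq_zero one_ne_zero (two_eq_zero hcard)
  unfold tr
  rw [sum_pow_char (R := F) 2]
  refine Finset.sum_congr rfl fun i _ => ?_
  rw [← pow_mul, ← pow_mul, mul_comm]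

theorem tr_cases (hcard : Fintype.card F = 2 ^ 20) (a : F) : tr a = 0 ∨ tr a = 1 := by
  have h := (tr_sq' hcard a).symm.trans (tr_sq hcard a)
  have : tr a * (tr a - 1) = 0 := by rw [mul_sub, mul_one, ← sq, h, sub_self]
  rcases mul_eq_zero.1 this with h | h
  · exact Or.inl h
  · exact Or.inr (sub_eq_zero.1 h)

theorem psi_zero : psi (0 : F) = 1 := by simp [psi, tr_zero]

theorem psi_sq (hcard : Fintype.card F = 2 ^ 20) (a : F) : psi (a ^ 2) = psi a := by
  simp only [psi, tr_sq hcard]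

theorem psi_add (hcard : Fintype.card F = 2 ^ 20) (a b : F) : psi (a + b) = psi a * psi b := by
  have h2 := two_eq_zero hcard
  simp only [psi, tr_add hcard]
  rcases tr_cases hcard a with h | h <;> rcases tr_cases hcard b with h' | h' <;> rw [h, h'] <;>
    simp [one_add_one_eq_two, h2]

theorem tr_c (hcard : Fintype.card F = 2 ^ 20) (x : F)
    (hx : x ^ 20 = x ^ 12 + x ^ 8 + x ^ 6 + x ^ 4 + x ^ 3 + 1) (i : ℕ) (hi : i < 20) :
    tr (ev x 263254 * x ^ i) = if i = 19 then 1 else 0 := by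
  have h2 := two_eq_zero hcard
  have h := congrArg (ev x) (trc i hi)
  rw [ev_trN x h2 hx, ev_mulN x h2 hx, ev_two_pow x i hi] at h
  unfold tr
  rw [h]
  split_ifs
  · exact ev_one x
  · exact ev_zero x

theorem psi_c (hcard : Fintype.card F = 2 ^ 20) (x : F)
    (hx : x ^ 20 = x ^ 12 + x ^ 8 + x ^ 6 + x ^ 4 + x ^ 3 + 1) (n : ℕ) :
    psi (ev x 263254 * ev x n) = if n.testBit 19 then -1 else 1 := by
  let T : F →+ F := AddMonoidHom.mk' tr (tr_add hcard)
  have h : tr (ev x 263254 * ev x n) = if n.testBit 19 then 1 else 0 := by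
    show T (ev x 263254 * ∑ i ∈ Finset.range 20, if n.testBit i then x ^ i else 0) = _
    rw [Finset.mul_sum, map_sum, Finset.sum_eq_single 19]
    · split_ifs
      · exact (tr_c hcard x hx 19 (by norm_num)).trans (by simp)
      · simp
    · intro i hi hne
      split_ifs
      · exact (tr_c hcard x hx i (Finset.mem_range.1 hi)).trans (by simp [hne])
      · simp
    · simp
  unfold psi
  rw [h]
  split_ifs <;> simp_all

theorem step_div (w : ℕ) : step w / 1048576 = w / 1048576 + if w.testBit 19 then 1 else 0 := by
  rw [testBit19]
  unfold step
  cases h : Nat.blt (w % 1048576) 524288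
  · have h' : ¬ (w % 1048576 < 524288) := by
      rw [← Nat.blt_eq, h]; simp
    simp only [cond_false, Bool.not_false, if_true]
    have e : Nat.xor (w + w % 1048576) 4441 = (w + w % 1048576) ^^^ 4441 := rfl
    have e2 : (1048576 : ℕ) = 2 ^ 20 := by norm_num
    have e3 : ((w + w % 1048576) ^^^ 4441) / 2 ^ 20 = (w + w % 1048576) / 2 ^ 20 := by
      rw [Nat.xor_div_two_pow]; simp
    rw [e]
    norm_num at e3
    rw [e3]; omega
  · have h' : (w % 1048576 < 524288) := by
      rw [← Nat.blt_eq, h]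
    simp only [cond_true, Bool.not_true]
    simp
    omega

theorem iter_sum (hcard : Fintype.card F = 2 ^ 20) (x : F)
    (hx : x ^ 20 = x ^ 12 + x ^ 8 + x ^ 6 + x ^ 4 + x ^ 3 + 1) (w k : ℕ) :
    ev x (step^[k] w) = x ^ k * ev x w ∧
    ∑ i ∈ Finset.range k, psi (ev x 263254 * (x ^ i * ev x w)) + 2 * ((step^[k] w / 1048576 : ℕ) : ℤ)
      = k + 2 * ((w / 1048576 : ℕ) : ℤ) := by
  have h2 := two_eq_zero hcard
  induction k with
  | zero => simp
  | succ k ih =>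
    obtain ⟨h1, h3⟩ := ih
    rw [Function.iterate_succ_apply', ev_step x h2 hx, h1]
    refine ⟨by ring, ?_⟩
    rw [Finset.sum_range_succ, step_div, ← h1, psi_c hcard x hx]
    rw [Nat.cast_add, Nat.cast_add]
    split_ifs <;> simp only [Nat.cast_one, Nat.cast_zero] <;> linarith

theorem eta_val (hcard : Fintype.card F = 2 ^ 20) (x : F)
    (hx : x ^ 20 = x ^ 12 + x ^ 8 + x ^ 6 + x ^ 4 + x ^ 3 + 1) (a n A : ℕ) (ha : a < 2 ^ 20)
    (hn : n < 1048576) (h1 : mulN (powN 20 20287 a) 20 4 = n) (h3 : cntAll n = A * 1048576 + n) :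
    ∑ k ∈ Finset.range 13981, psi (ev x 20287 ^ a * x ^ k) = 13981 - 2 * (A : ℤ) := by
  have h2 := two_eq_zero hcard
  have h := (iter_sum hcard x hx n 13981).2
  rw [← cntAll_eq, h3] at h
  have e1 : (A * 1048576 + n) / 1048576 = A := by omega
  have e2 : n / 1048576 = 0 := by omega
  rw [e1, e2] at h
  have e3 : ev x 263254 * ev x n = ev x 20287 ^ a := by
    rw [← h1, ev_mulN x h2 hx, ev_powN x h2 hx 20 _ _ ha, mul_left_comm, ← ev_mulN x h2 hx, cinv,
      ev_one, mul_one]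
  have e4 : ∀ k, ev x 20287 ^ a * x ^ k = ev x 263254 * (x ^ k * ev x n) := by
    intro k; rw [← e3]; ring
  simp only [e4]
  push_cast at h
  linarith

theorem order_g (hcard : Fintype.card F = 2 ^ 20) (x : F)
    (hx : x ^ 20 = x ^ 12 + x ^ 8 + x ^ 6 + x ^ 4 + x ^ 3 + 1) :
    ev x 20287 ^ 75 = x ∧ orderOf (ev x 20287) = 1048575 := by
  have h2 := two_eq_zero hcard
  have ev2 : ev x 2 = x := by simpa using ev_two_pow x 1 (by norm_num)
  have h75 : ev x 20287 ^ 75 = x := by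
    rw [← ev_powN x h2 hx 20 _ _ (by norm_num), pw75, ev2]
  have hx1 : x ^ 13981 = 1 := by
    have := ev_powN x h2 hx 20 2 13981 (by norm_num)
    rw [pwx, ev_one, ev2] at this
    exact this.symm
  refine ⟨h75, ?_⟩
  have key : ∀ e b, e < 2 ^ 20 → mulN (Nat.xor (powN 20 20287 e) 1) 20 b = 1 →
      ev x 20287 ^ e ≠ 1 := by
    intro e b he h h'
    have := congrArg (ev x) h
    rw [ev_mulN x h2 hx, ev_xor x h2, ev_powN x h2 hx 20 _ _ he, h', ev_one, add_self' h2,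
      zero_mul] at this
    exact zero_ne_one this
  refine orderOf_eq_of_pow_and_pow_div_prime (by norm_num) ?_ ?_
  · have : 1048575 = 75 * 13981 := by norm_num
    rw [this, pow_mul, h75, hx1]
  · intro p hp hd
    have : (1048575 : ℕ) = 3 * (5 * (5 * (11 * (31 * 41)))) := by norm_num
    have hd' := hd
    rw [this] at hd'
    have pr : ∀ r, r.Prime → p ∣ r → p = r := fun r hr h => (Nat.prime_dvd_prime_iff_eq hp hr).1 h
    have hp' : p = 3 ∨ p = 5 ∨ p = 11 ∨ p = 31 ∨ p = 41 := by
      rcases hp.dvd_mul.1 hd' with h | h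
      · exact Or.inl (pr 3 (by norm_num) h)
      rcases hp.dvd_mul.1 h with h | h
      · exact Or.inr (Or.inl (pr 5 (by norm_num) h))
      rcases hp.dvd_mul.1 h with h | h
      · exact Or.inr (Or.inl (pr 5 (by norm_num) h))
      rcases hp.dvd_mul.1 h with h | h
      · exact Or.inr (Or.inr (Or.inl (pr 11 (by norm_num) h)))
      rcases hp.dvd_mul.1 h with h | h
      · exact Or.inr (Or.inr (Or.inr (Or.inl (pr 31 (by norm_num) h))))
      · exact Or.inr (Or.inr (Or.inr (Or.inr (pr 41 (by norm_num) h))))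
    rcases hp' with rfl | rfl | rfl | rfl | rfl
    · exact key _ _ (by norm_num) q3
    · exact key _ _ (by norm_num) q5
    · exact key _ _ (by norm_num) q11
    · exact key _ _ (by norm_num) q31
    · exact key _ _ (by norm_num) q41

theorem orth (hcard : Fintype.card F = 2 ^ 20) (u : F) :
    ∑ b : F, psi (b * u) = if u = 0 then 1048576 else 0 := by
  split_ifs with h
  · simp [h, psi_zero, hcard]
  · obtain ⟨x, hx⟩ := exists_root hcard
    have h1 : ∑ b : F, psi (b * u) = ∑ b : F, psi b :=
      Fintype.sum_equiv (Equiv.mulRight₀ u h) _ _ fun b => rfl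
    obtain ⟨y, hy⟩ : ∃ y : F, psi y = -1 :=
      ⟨ev x 263254 * ev x (2 ^ 19), by rw [psi_c hcard x hx, Nat.testBit_two_pow_self]; simp⟩
    have h3 : ∑ b : F, psi b = ∑ b : F, psi (b + y) :=
      (Fintype.sum_equiv (Equiv.addRight y) _ _ fun b => rfl).symm
    simp only [psi_add hcard, hy, ← Finset.sum_mul] at h3
    rw [h1]; linarith

end field

def tbl : List ℤ :=
  [541, 29, 29, -67, 29, 221, -67, -3, 29, -67, 221, -3, -67, -3, -3, 29, 29, 29, -67, 29, 221,
   -67, -3, 29, -67, 221, -3, -67, -3, -3, 29, 29, 29, -67, 29, -291, -67, -3, 29, -67, 221, -3,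
   -67, -3, -3, 29, 29, 29, -67, 29, 221, -67, -3, 29, -67, -291, -3, -67, -3, -3, 29, 29, 29,
   -67, 29, -291, -67, -3, 29, -67, -291, -3, -67, -3, -3]

theorem tbl_orbits : ∀ m < 75, ∃ r ∈ [0, 1, 3, 5, 7, 15, 25, 35], ∃ j < 20,
    r * 2 ^ j % 75 = m ∧ tbl.getD m 0 = tbl.getD r 0 := by decide +kernel

theorem tbl_sums : ∀ t < 75, t % 3 ≠ 0 → t % 5 ≠ 0 → ∀ m < 75,
    tbl.getD (m % 75) 0 + tbl.getD ((m + 3 * t) % 75) 0 + tbl.getD ((m + 6 * t) % 75) 0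
      + tbl.getD ((m + 9 * t) % 75) 0 + tbl.getD ((m + 12 * t) % 75) 0 = 273 ∨
    tbl.getD (m % 75) 0 + tbl.getD ((m + 3 * t) % 75) 0 + tbl.getD ((m + 6 * t) % 75) 0
      + tbl.getD ((m + 9 * t) % 75) 0 + tbl.getD ((m + 12 * t) % 75) 0 = -239 := by
  decide +kernel

section field2
variable {F : Type*} [Field F] [Fintype F]

/-- The subgroup of order 13981 of the multiplicative group. -/
noncomputable def H (F : Type*) [Field F] [Fintype F] : Finset F :=
  Finset.univ.filter fun z => z ^ 13981 = 1

theorem mem_H (z : F) : z ∈ H F ↔ z ^ 13981 = 1 := by simp [H]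

noncomputable def eta (y : F) : ℤ := ∑ z ∈ H F, psi (y * z)

theorem eta_mul (y z : F) (hz : z ∈ H F) : eta (y * z) = eta y := by
  unfold eta
  rw [mem_H] at hz
  have hz' : z * z ^ 13980 = 1 := by rw [← pow_succ', hz]
  refine Finset.sum_nbij' (fun w => z * w) (fun w => z ^ 13980 * w) ?_ ?_ ?_ ?_ ?_
  · intro w hw; rw [mem_H] at *; rw [mul_pow, hz, hw, one_mul]
  · intro w hw; rw [mem_H] at *
    rw [mul_pow, hw, ← pow_mul, mul_comm 13980, pow_mul, hz, one_pow, one_mul]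
  · intro w _; rw [← mul_assoc, mul_comm _ z, hz', one_mul]
  · intro w _; rw [← mul_assoc, hz', one_mul]
  · intro w _; rw [mul_assoc]

theorem eta_sq (hcard : Fintype.card F = 2 ^ 20) (y : F) : eta (y ^ 2) = eta y := by
  unfold eta
  symm
  have hp : ∀ z : F, z ∈ H F → z ^ (6991 * 2) = z := by
    intro z hz; rw [mem_H] at hz
    have : 6991 * 2 = 13981 + 1 := by norm_num
    rw [this, pow_succ, hz, one_mul]
  refine Finset.sum_nbij' (fun w => w ^ 2) (fun w => w ^ 6991) ?_ ?_ ?_ ?_ ?_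
  · intro w hw; rw [mem_H] at *; rw [← pow_mul, mul_comm, pow_mul, hw, one_pow]
  · intro w hw; rw [mem_H] at *; rw [← pow_mul, mul_comm, pow_mul, hw, one_pow]
  · intro w hw; rw [← pow_mul, mul_comm 2, hp w hw]
  · intro w hw; rw [← pow_mul, hp w hw]
  · intro w _; rw [← mul_pow, psi_sq hcard]

theorem eta_two_pow (hcard : Fintype.card F = 2 ^ 20) (y : F) (j : ℕ) :
    eta (y ^ (2 ^ j)) = eta y := by
  induction j with
  | zero => simp
  | succ j ih => rw [pow_succ, pow_mul, eta_sq hcard, ih]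

/-- A generator of the multiplicative group exhausts the nonzero elements. -/
theorem exists_pow (hcard : Fintype.card F = 2 ^ 20) (g : F) (hg : orderOf g = 1048575) (y : F)
    (hy : y ≠ 0) : ∃ m : ℕ, y = g ^ m := by
  have hg0 : g ≠ 0 := by
    rintro rfl
    have : (0 : F) ^ orderOf (0 : F) = 1 := pow_orderOf_eq_one 0
    rw [hg] at this
    simp at this
  let u : Fˣ := Units.mk0 g hg0
  have hu : orderOf u = Nat.card Fˣ := by
    have : orderOf (u : F) = orderOf u := orderOf_units
    rw [← this, Nat.card_units, Nat.card_eq_fintype_card, hcard]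
    show orderOf g = _
    rw [hg]; norm_num
  have : Units.mk0 y hy ∈ Submonoid.powers u := by
    rw [mem_powers_iff_mem_zpowers, (Subgroup.card_eq_iff_eq_top _).1 ((Nat.card_zpowers u).trans hu)]
    trivial
  obtain ⟨m, hm⟩ := this
  refine ⟨m, ?_⟩
  have := congrArg Units.val hm
  simpa [u] using this.symm

theorem H_pow (hcard : Fintype.card F = 2 ^ 20) (g : F) (hg : orderOf g = 1048575) (z : F)
    (hz : z ∈ H F) : ∃ m : ℕ, z = (g ^ 75) ^ m := by
  rw [mem_H] at hz
  obtain ⟨m, rfl⟩ := exists_pow hcard g hg z (by rintro rfl; simp at hz)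
  rw [← pow_mul] at hz
  have := orderOf_dvd_of_pow_eq_one hz
  rw [hg] at this
  obtain ⟨k, rfl⟩ : 75 ∣ m := by omega
  exact ⟨k, pow_mul _ _ _⟩

theorem pow_mem_H (g : F) (hg : orderOf g = 1048575) (m : ℕ) : (g ^ 75) ^ m ∈ H F := by
  rw [mem_H, ← pow_mul, ← pow_mul]
  have : 75 * (m * 13981) = 1048575 * m := by ring
  rw [this, pow_mul, ← hg, pow_orderOf_eq_one, one_pow]

theorem sum_H (hcard : Fintype.card F = 2 ^ 20) (g : F) (hg : orderOf g = 1048575) (f : F → ℤ) :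
    ∑ z ∈ H F, f z = ∑ k ∈ Finset.range 13981, f ((g ^ 75) ^ k) := by
  have hx : orderOf (g ^ 75) = 13981 := by
    rw [orderOf_pow' g (by norm_num), hg]; norm_num
  symm
  refine Finset.sum_nbij (fun k => (g ^ 75) ^ k) ?_ ?_ ?_ ?_
  · intro k _; exact pow_mem_H g hg k
  · intro a ha b hb h
    refine pow_injOn_Iio_orderOf ?_ ?_ h
    · rw [hx]; simpa using ha
    · rw [hx]; simpa using hb
  · intro z hz
    obtain ⟨m, rfl⟩ := H_pow hcard g hg z hz
    refine ⟨m % 13981, by simpa using Nat.mod_lt m (by norm_num), ?_⟩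
    dsimp only
    rw [← hx, pow_mod_orderOf]
  · intro _ _; rfl

theorem exists_gen (hcard : Fintype.card F = 2 ^ 20) :
    ∃ g : F, orderOf g = 1048575 ∧ ∀ m : ℕ, eta (g ^ m) = tbl.getD (m % 75) 0 := by
  obtain ⟨x, hx⟩ := exists_root hcard
  obtain ⟨h75, hg⟩ := order_g hcard x hx
  refine ⟨ev x 20287, hg, ?_⟩
  have e0 : ∀ a, eta (ev x 20287 ^ a) =
      ∑ k ∈ Finset.range 13981, psi (ev x 20287 ^ a * x ^ k) := by
    intro a
    unfold eta
    rw [sum_H hcard _ hg, h75]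
  generalize hgd : ev x 20287 = g at *
  have hmod : ∀ m : ℕ, eta (g ^ m) = eta (g ^ (m % 75)) := by
    intro m
    conv_lhs => rw [← Nat.mod_add_div m 75, pow_add, pow_mul]
    exact eta_mul _ _ (pow_mem_H g hg _)
  have hreps : ∀ r ∈ [0, 1, 3, 5, 7, 15, 25, 35], eta (g ^ r) = tbl.getD r 0 := by
    have key := fun a n A => eta_val hcard x hx a n A
    rw [hgd] at key
    intro r hr
    rw [e0]
    simp only [List.mem_cons, List.not_mem_nil, or_false] at hr
    rcases hr with rfl | rfl | rfl | rfl | rfl | rfl | rfl | rfl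
    · rw [key 0 4 6720 (by norm_num) (by norm_num) (by decide +kernel) c0]; decide
    · rw [key 1 _ _ (by norm_num) (by norm_num) st1 c1]; decide
    · rw [key 3 _ _ (by norm_num) (by norm_num) st3 c3]; decide
    · rw [key 5 _ _ (by norm_num) (by norm_num) st5 c5]; decide
    · rw [key 7 _ _ (by norm_num) (by norm_num) st7 c7]; decide
    · rw [key 15 _ _ (by norm_num) (by norm_num) st15 c15]; decide
    · rw [key 25 _ _ (by norm_num) (by norm_num) st25 c25]; decide
    · rw [key 35 _ _ (by norm_num) (by norm_num) st35 c35]; decide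
  intro m
  obtain ⟨r, hr, j, -, h1, h2⟩ := tbl_orbits (m % 75) (Nat.mod_lt _ (by norm_num))
  rw [hmod, h2, ← h1, ← hmod, pow_mul, eta_two_pow hcard, hreps r hr]

theorem mem_cyc (hcard : Fintype.card F = 2 ^ 20) (γ : Fˣ) (hγ : orderOf (γ : F) = 1048575)
    (i : ℕ) (d : F) : d ∈ cycClass γ 75 i ↔ ∃ z ∈ H F, d = (γ : F) ^ i * z := by
  constructor
  · rintro ⟨k, rfl⟩
    refine ⟨(((γ ^ 75) ^ k : Fˣ) : F), ?_, ?_⟩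
    · rw [mem_H]
      have : ((γ ^ 75) ^ k) ^ 13981 = (1 : Fˣ) := by
        have h1 : γ ^ 1048575 = 1 := by
          rw [orderOf_units] at hγ
          rw [← hγ, pow_orderOf_eq_one]
        have h2 : γ ^ 75 ^ 1 = γ ^ 75 := by simp
        rw [← zpow_natCast, ← zpow_mul, mul_comm, zpow_mul, zpow_natCast, ← pow_mul]
        norm_num [h1]
      rw [← Units.val_pow_eq_pow_val, this, Units.val_one]
    · rw [zpow_add, zpow_mul]
      push_cast
      norm_cast
  · rintro ⟨z, hz, rfl⟩
    obtain ⟨m, rfl⟩ := H_pow hcard _ hγ z hz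
    refine ⟨m, ?_⟩
    rw [zpow_add, zpow_mul]
    push_cast
    norm_cast

theorem sum_D (hcard : Fintype.card F = 2 ^ 20) (γ : F) (hγ : orderOf γ = 1048575)
    (D : Finset F) (hD : ∀ d, d ∈ D ↔ ∃ i < 5, ∃ z ∈ H F, d = γ ^ (3 * i) * z) (f : F → ℤ) :
    ∑ d ∈ D, f d = ∑ i ∈ Finset.range 5, ∑ z ∈ H F, f (γ ^ (3 * i) * z) := by
  rw [← Finset.sum_product']
  symm
  have hγ0 : γ ≠ 0 := by
    rintro rfl
    have : (0 : F) ^ orderOf (0 : F) = 1 := pow_orderOf_eq_one 0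
    rw [hγ] at this
    simp at this
  refine Finset.sum_nbij (fun p => γ ^ (3 * p.1) * p.2) ?_ ?_ ?_ ?_
  · rintro ⟨i, z⟩ h
    simp only [Finset.mem_product, Finset.mem_range] at h
    exact (hD _).2 ⟨i, h.1, z, h.2, rfl⟩
  · rintro ⟨i, z⟩ h ⟨i', z'⟩ h' e
    simp only [Finset.coe_product, Set.mem_prod, Finset.mem_coe, Finset.mem_range] at h h'
    dsimp only at e
    have hz := (mem_H z).1 h.2
    have hz' := (mem_H z').1 h'.2
    have e1 := congrArg (fun t => t ^ 13981) e
    simp only [mul_pow, hz, hz', mul_one, ← pow_mul] at e1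
    have hii : 3 * i * 13981 = 3 * i' * 13981 := by
      refine pow_injOn_Iio_orderOf ?_ ?_ e1
      · rw [hγ, Set.mem_Iio]; omega
      · rw [hγ, Set.mem_Iio]; omega
    have hi : i = i' := by omega
    subst hi
    have := mul_left_cancel₀ (pow_ne_zero _ hγ0) e
    rw [this]
  · intro d hd
    obtain ⟨i, hi, z, hz, rfl⟩ := (hD d).1 hd
    exact ⟨(i, z), by simp [hi, hz], rfl⟩
  · intro _ _; rfl

theorem S_values (hcard : Fintype.card F = 2 ^ 20) (γ : F) (hγ : orderOf γ = 1048575)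
    (D : Finset F) (hD : ∀ d, d ∈ D ↔ ∃ i < 5, ∃ z ∈ H F, d = γ ^ (3 * i) * z) (b : F)
    (hb : b ≠ 0) : ∑ d ∈ D, psi (b * d) = 273 ∨ ∑ d ∈ D, psi (b * d) = -239 := by
  obtain ⟨g, hg, htab⟩ := exists_gen hcard
  obtain ⟨m, rfl⟩ := exists_pow hcard g hg b hb
  obtain ⟨t, rfl⟩ := exists_pow hcard g hg γ (by
    rintro rfl
    have : (0 : F) ^ orderOf (0 : F) = 1 := pow_orderOf_eq_one 0
    rw [hγ] at this
    simp at this)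
  have hp : ∀ p k, 0 < k → k < 1048575 → p * k = 1048575 → ¬ p ∣ t := by
    rintro p k hk0 hk hpk ⟨s, rfl⟩
    have h1 : (g ^ (p * s)) ^ k = 1 := by
      have : p * s * k = 1048575 * s := by rw [← hpk]; ring
      rw [← pow_mul, this, pow_mul, ← hg, pow_orderOf_eq_one, one_pow]
    have := Nat.le_of_dvd hk0 (orderOf_dvd_of_pow_eq_one h1)
    omega
  have h3 := hp 3 349525 (by norm_num) (by norm_num) (by norm_num)
  have h5 := hp 5 209715 (by norm_num) (by norm_num) (by norm_num)
  rw [sum_D hcard _ hγ D hD]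
  have e : ∀ i, ∑ z ∈ H F, psi (g ^ m * ((g ^ t) ^ (3 * i) * z)) =
      tbl.getD ((m % 75 + 3 * i * (t % 75)) % 75) 0 := by
    intro i
    have : ∀ z, g ^ m * ((g ^ t) ^ (3 * i) * z) = g ^ (m + 3 * i * t) * z := by
      intro z; ring
    simp only [this]
    have h := htab (m + 3 * i * t)
    unfold eta at h
    rw [h]
    congr 1
    conv_lhs => rw [Nat.add_mod, Nat.mul_mod]
    conv_rhs => rw [Nat.add_mod, Nat.mul_mod]
    simp
  simp only [e, Finset.sum_range_succ, Finset.sum_range_zero]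
  have := tbl_sums (t % 75) (Nat.mod_lt _ (by norm_num)) (by omega) (by omega) (m % 75)
    (Nat.mod_lt _ (by norm_num))
  simpa using this

theorem card_D (hcard : Fintype.card F = 2 ^ 20) (γ : F) (hγ : orderOf γ = 1048575)
    (D : Finset F) (hD : ∀ d, d ∈ D ↔ ∃ i < 5, ∃ z ∈ H F, d = γ ^ (3 * i) * z) :
    D.card = 69905 := by
  have h := sum_D hcard γ hγ D hD fun _ => 1
  have h' := sum_H hcard γ hγ fun _ => 1
  simp only [Finset.sum_const, nsmul_eq_mul, mul_one, Finset.card_range] at h h'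
  rw [h'] at h
  norm_num at h
  exact_mod_cast h

theorem count (hcard : Fintype.card F = 2 ^ 20) (D : Finset F) (hk : D.card = 69905)
    (hS : ∀ b : F, b ≠ 0 → ∑ d ∈ D, psi (b * d) = 273 ∨ ∑ d ∈ D, psi (b * d) = -239)
    (y : F) (hy : y ≠ 0) :
    (D.filter fun z => z + y ∈ D).card = if y ∈ D then 4692 else 4658 := by
  have h2 := two_eq_zero hcard
  have aux : ∀ a b : F, a + b = 0 ↔ b = a := by
    intro a b
    constructor
    · intro h
      have := add_self' h2 a
      exact add_left_cancel (h.trans this.symm)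
    · rintro rfl; exact add_self' h2 b
  let S : F → ℤ := fun b => ∑ d ∈ D, psi (b * d)
  have hS0 : S 0 = 69905 := by simp [S, psi_zero, hk]
  have hq : ∀ b, S b ^ 2 = 34 * S b + 65247 + if b = 0 then 4884267008 else 0 := by
    intro b
    by_cases hb : b = 0
    · subst hb; rw [hS0]; norm_num
    · rcases hS b hb with h | h
      · have : S b = 273 := h
        rw [this]; simp [hb]
      · have : S b = -239 := h
        rw [this]; simp [hb]
  have hA : ∑ b, S b * psi (b * y) = if y ∈ D then 1048576 else 0 := by
    simp only [S, Finset.sum_mul, ← psi_add hcard, ← mul_add]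
    rw [Finset.sum_comm]
    simp only [orth hcard, aux]
    rw [Finset.sum_ite_eq]
  have hB : ∑ b, S b ^ 2 * psi (b * y) = 1048576 * ((D.filter fun z => z + y ∈ D).card : ℤ) := by
    have e : ∀ b, S b ^ 2 * psi (b * y) =
        ∑ z ∈ D, ∑ z' ∈ D, psi (b * (z + y + z')) := by
      intro b
      simp only [S, mul_add, psi_add hcard]
      rw [sq, Finset.sum_mul_sum, Finset.sum_mul]
      refine Finset.sum_congr rfl fun z _ => ?_
      rw [Finset.sum_mul]
      refine Finset.sum_congr rfl fun z' _ => by ring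
    simp only [e]
    rw [Finset.sum_comm]
    have e2 : ∀ z ∈ D, ∑ b, ∑ z' ∈ D, psi (b * (z + y + z')) =
        if z + y ∈ D then 1048576 else 0 := by
      intro z _
      rw [Finset.sum_comm]
      simp only [orth hcard, aux]
      rw [Finset.sum_ite_eq']
    rw [Finset.sum_congr rfl e2, ← Finset.sum_filter, Finset.sum_const, nsmul_eq_mul, mul_comm]
  have hC : ∑ b, S b ^ 2 * psi (b * y) = 34 * (∑ b, S b * psi (b * y)) + 4884267008 := by
    have e : ∀ b, S b ^ 2 * psi (b * y) = 34 * (S b * psi (b * y)) + 65247 * psi (b * y) +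
        if b = 0 then 4884267008 else 0 := by
      intro b
      rw [hq]
      by_cases hb : b = 0
      · subst hb; simp [psi_zero]
      · simp [hb]; ring
    simp only [e, Finset.sum_add_distrib, ← Finset.mul_sum, orth hcard, hy]
    simp
  rw [hB, hA] at hC
  split_ifs at hC ⊢ <;> omega

theorem srg (hcard : Fintype.card F = 2 ^ 20) (D : Finset F) (hk : D.card = 69905)
    (h0 : (0 : F) ∉ D)
    (hN : ∀ y : F, y ≠ 0 → (D.filter fun z => z + y ∈ D).card = if y ∈ D then 4692 else 4658) :
    (cayley (D : Set F)).IsSRGWith (Fintype.card F) 69905 4692 4658 := by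
  have h2 := two_eq_zero hcard
  have hneg : ∀ a : F, -a = a := fun a => neg_eq_of_add_eq_zero_left (add_self' h2 a)
  have hadj : ∀ v w, (cayley (D : Set F)).Adj v w ↔ v + w ∈ D := by
    intro v w
    simp only [cayley, SimpleGraph.fromRel_adj, Finset.mem_coe, sub_eq_add_neg, hneg]
    rw [add_comm w v, or_self]
    refine ⟨fun h => h.2, fun h => ⟨?_, h⟩⟩
    rintro rfl
    rw [add_self' h2] at h
    exact h0 h
  have hcn : ∀ v w, v ≠ w → Fintype.card ((cayley (D : Set F)).commonNeighbors v w) =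
      if v + w ∈ D then 4692 else 4658 := by
    intro v w hvw
    have hne : v + w ≠ 0 := by
      intro h
      apply hvw
      have := eq_neg_of_add_eq_zero_left h
      rw [this, hneg]
    rw [← hN _ hne, ← Fintype.card_coe]
    refine Fintype.card_congr ⟨fun u => ⟨v + u.1, ?_⟩, fun z => ⟨v + z.1, ?_⟩, ?_, ?_⟩
    · have hu := u.2
      rw [SimpleGraph.mem_commonNeighbors, hadj, hadj] at hu
      rw [Finset.mem_filter]
      refine ⟨hu.1, ?_⟩
      have : v + u.1 + (v + w) = w + u.1 := by linear_combination v * h2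
      rw [this]; exact hu.2
    · have hz := Finset.mem_filter.1 z.2
      rw [SimpleGraph.mem_commonNeighbors, hadj, hadj]
      have e1 : v + (v + z.1) = z.1 := by linear_combination v * h2
      have e2 : w + (v + z.1) = z.1 + (v + w) := by ring
      rw [e1, e2]
      exact hz
    · intro u
      apply Subtype.ext
      show v + (v + u.1) = u.1
      linear_combination v * h2
    · intro u
      apply Subtype.ext
      show v + (v + u.1) = u.1
      linear_combination v * h2
  refine ⟨rfl, ?_, ?_, ?_⟩
  · intro v
    rw [← hk, ← SimpleGraph.card_neighborSet_eq_degree, ← Fintype.card_coe]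
    refine Fintype.card_congr ⟨fun u => ⟨v + u.1, ?_⟩, fun z => ⟨v + z.1, ?_⟩, ?_, ?_⟩
    · exact (hadj _ _).1 u.2
    · have e1 : v + (v + z.1) = z.1 := by linear_combination v * h2
      show (cayley (D : Set F)).Adj v (v + z.1)
      rw [hadj, e1]; exact z.2
    · intro u
      apply Subtype.ext
      show v + (v + u.1) = u.1
      linear_combination v * h2
    · intro u
      apply Subtype.ext
      show v + (v + u.1) = u.1
      linear_combination v * h2
  · intro v w h
    have := hcn v w h.ne
    rw [if_pos ((hadj _ _).1 h)] at this
    convert this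
  · intro v w hvw h
    have := hcn v w hvw
    rw [if_neg (fun h' => h ((hadj _ _).2 h'))] at this
    convert this

end field2

end IM

/-- Ikuta–Munemasa's example: `q = 2²⁰`, `N = 75`,
`D = C₀ ∪ C₃ ∪ C₆ ∪ C₉ ∪ C₁₂` gives a strongly regular Cayley graph. -/
theorem statement_19 (F : Type*) [Field F] [Fintype F] (hcard : Fintype.card F = 2 ^ 20)
    (γ : Fˣ) (hγ : ∀ x : Fˣ, x ∈ Subgroup.zpowers γ)
    (D : Set F)
    (hD : D = cycClass γ 75 0 ∪ cycClass γ 75 3 ∪ cycClass γ 75 6 ∪ cycClass γ 75 9 ∪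
      cycClass γ 75 12) :
    ∃ k lam mu : ℕ, (cayley D).IsSRGWith (Fintype.card F) k lam mu := by
  have hγ' : orderOf (γ : F) = 1048575 := by
    rw [orderOf_units, orderOf_eq_card_of_forall_mem_zpowers hγ, Nat.card_units,
      Nat.card_eq_fintype_card, hcard]
    norm_num
  have hfin : D = ((D.toFinset : Finset F) : Set F) := by simp
  have hmem : ∀ d, d ∈ D.toFinset ↔ ∃ i < 5, ∃ z ∈ IM.H F, d = (γ : F) ^ (3 * i) * z := by
    intro d
    rw [Set.mem_toFinset, hD]
    simp only [Set.mem_union, IM.mem_cyc hcard γ hγ']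
    constructor
    · rintro ((((h | h) | h) | h) | h)
      · exact ⟨0, by norm_num, h⟩
      · exact ⟨1, by norm_num, h⟩
      · exact ⟨2, by norm_num, h⟩
      · exact ⟨3, by norm_num, h⟩
      · exact ⟨4, by norm_num, h⟩
    · rintro ⟨i, hi, h⟩
      interval_cases i
      · exact Or.inl (Or.inl (Or.inl (Or.inl h)))
      · exact Or.inl (Or.inl (Or.inl (Or.inr h)))
      · exact Or.inl (Or.inl (Or.inr h))
      · exact Or.inl (Or.inr h)
      · exact Or.inr h
  have hk := IM.card_D hcard _ hγ' _ hmem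
  have hS := IM.S_values hcard _ hγ' _ hmem
  have h0 : (0 : F) ∉ D.toFinset := by
    intro h
    obtain ⟨i, -, z, hz, h⟩ := (hmem 0).1 h
    rw [IM.mem_H] at hz
    rcases mul_eq_zero.1 h.symm with h | h
    · exact pow_ne_zero _ γ.ne_zero h
    · rw [h] at hz; simp at hz
  refine ⟨69905, 4692, 4658, ?_⟩
  have := IM.srg hcard D.toFinset hk h0 (IM.count hcard _ hk hS)
  generalize D.toFinset = D' at *
  subst hfin
  convert this
end
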